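/- Let ρ be a weight on L(G), let M ≥ 1 and w ∈ ℝ, and let 1 < p < ∞. The following are equivalent: (i) for every t ≥ 0 the left translation T_t defines a bounded linear operator on L^p_ρ(L(G)), the family {T_t}_{t≥0} is a C₀-semigroup on L^p_ρ(L(G)), and ‖T_t‖ ≤ M e^{wt} for all t ≥ 0; (ii) for all i ∈ I, all t ≥ 0, and almost every s ∈ [0,1], one has (Σ_{j∈M_{n(t,s)}(i)} ρ_j(s+t−n(t,s))^{−1/(p−1)})^{p−1} ≤ M^p e^{pwt} / ρ_i(s), where the left-hand side is interpreted as 0 when M_{n(t,s)}(i) is empty. -/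

import Mathlib

open MeasureTheory ENNReal Filter

noncomputable section

variable {I : Type*}

/-- The `n`-fold iterate of the parent map `P : I → Option I` of a directed metric tree,
encoded on the set of edges `I`. -/
def pIter (P : I → Option I) : ℕ → I → Option I
  | 0, j => some j
  | n + 1, j => (P j).bind (pIter P n)

/-- `Mset P n i` is the set of edges reachable from the edge `i` in `n` steps,
i.e. `M_n(i) = {j | P^[n] j = some i}`; `Mset P 0 i = {i}`. -/
def Mset (P : I → Option I) (n : ℕ) (i : I) : Set I := {j | pIter P n j = some i}

/-- `nfl t s = ⌊s + t⌋ ∈ ℕ`. -/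
def nfl (t s : ℝ) : ℕ := ⌊s + t⌋₊

/-- The left translation `T_t` on families of functions on the edges:
`(T_t f)_i (s) = ∑_{j ∈ M_{n(t,s)}(i)} f_j (t + s - n(t,s))`. -/
def Tleft (P : I → Option I) (f : I → ℝ → ℝ) (t : ℝ) (i : I) (s : ℝ) : ℝ :=
  ∑' j : Mset P (nfl t s) i, f (j : I) (t + s - (nfl t s : ℝ))

/-- The `p`-th power of the norm of a family `f` in `L^p_ρ(L(G))`:
`‖f‖_{p,ρ}^p = ∑_{i ∈ I} ∫_0^1 |f_i(s)|^p ρ_i(s) ds`, with values in `[0,∞]`. -/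
def pnorm (ρ : I → ℝ → ℝ) (p : ℝ) (f : I → ℝ → ℝ) : ℝ≥0∞ :=
  ∑' i, ∫⁻ s in Set.Icc (0 : ℝ) 1, ENNReal.ofReal (|f i s| ^ p * ρ i s)

/-- Membership in `L^p_ρ(L(G))`: each component is (a.e.) measurable on `[0,1]` and the
`ℓ^p`-direct sum norm is finite. -/
def memLprho (ρ : I → ℝ → ℝ) (p : ℝ) (f : I → ℝ → ℝ) : Prop :=
  (∀ i, AEMeasurable (f i) (volume.restrict (Set.Icc (0 : ℝ) 1))) ∧ pnorm ρ p f < ⊤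

/-- The norm `‖f‖_{p,ρ}` in `L^p_ρ(L(G))`, with values in `[0,∞]`. -/
def enorm' (ρ : I → ℝ → ℝ) (p : ℝ) (f : I → ℝ → ℝ) : ℝ≥0∞ := pnorm ρ p f ^ (1 / p)

/-- The distance `‖f - g‖_{p,ρ}` in `L^p_ρ(L(G))`, with values in `[0,∞]`. -/
def pdist (ρ : I → ℝ → ℝ) (p : ℝ) (f g : I → ℝ → ℝ) : ℝ≥0∞ :=
  enorm' ρ p fun i s => f i s - g i s

/-- A weight on `L(G)`: a family of integrable functions on `[0,1]`, strictly positive a.e. -/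
structure IsWeight (ρ : I → ℝ → ℝ) : Prop where
  integrable : ∀ i, IntegrableOn (ρ i) (Set.Icc (0 : ℝ) 1)
  pos : ∀ i, ∀ᵐ s ∂(volume.restrict (Set.Icc (0 : ℝ) 1)), 0 < ρ i s

/-- The `1`-admissibility condition (everywhere on `[0,1]`) with constants `M, w`:
`ρ_i(s) ≤ M e^{wt} inf_{j ∈ M_{n(t,s)}(i)} ρ_j(s+t-n(t,s))`, the infimum (in `[0,∞]`)
over the empty set being `+∞`. -/
def Admissible1 (P : I → Option I) (ρ : I → ℝ → ℝ) (M w : ℝ) : Prop :=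
  ∀ i, ∀ t ≥ (0 : ℝ), ∀ s ∈ Set.Icc (0 : ℝ) 1,
    ENNReal.ofReal (ρ i s) ≤ ENNReal.ofReal (M * Real.exp (w * t)) *
      ⨅ j : Mset P (nfl t s) i, ENNReal.ofReal (ρ (j : I) (s + t - (nfl t s : ℝ)))

/-- The `p`-admissibility condition (`1 < p < ∞`, everywhere on `[0,1]`) with constants `M, w`:
`(∑_{j ∈ M_{n(t,s)}(i)} ρ_j(s+t-n(t,s))^{-1/(p-1)})^{p-1} ≤ M^p e^{pwt} / ρ_i(s)`,
the sum being taken in `[0,∞]`. -/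
def AdmissibleP (P : I → Option I) (ρ : I → ℝ → ℝ) (p M w : ℝ) : Prop :=
  ∀ i, ∀ t ≥ (0 : ℝ), ∀ s ∈ Set.Icc (0 : ℝ) 1,
    (∑' j : Mset P (nfl t s) i,
        ENNReal.ofReal ((ρ (j : I) (s + t - (nfl t s : ℝ))) ^ (-(1 / (p - 1))))) ^ (p - 1)
      ≤ ENNReal.ofReal (M ^ p * Real.exp (p * w * t) / ρ i s)

/-- `p`-admissibility, `1 ≤ p < ∞`. -/
def Admissible (P : I → Option I) (ρ : I → ℝ → ℝ) (p M w : ℝ) : Prop :=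
  (p = 1 → Admissible1 P ρ M w) ∧ (1 < p → AdmissibleP P ρ p M w)

/-- The family of left translations `{T_t}_{t ≥ 0}` consists of bounded (linear) operators on
`L^p_ρ(L(G))` with `‖T_t‖ ≤ M e^{wt}`, and is a `C₀`-semigroup there: `T_0 = Id`,
`T_{t+u} = T_t ∘ T_u`, and `t ↦ T_t f` is continuous on `[0,∞)` for every `f`
(identities and continuity taken in the `L^p_ρ`-(semi)metric). -/
def C0SemigroupBound (P : I → Option I) (ρ : I → ℝ → ℝ) (p M w : ℝ) : Prop :=
  (∀ t ≥ (0 : ℝ), ∀ f, memLprho ρ p f → memLprho ρ p (Tleft P f t)) ∧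
  (∀ t ≥ (0 : ℝ), ∀ f, memLprho ρ p f →
      enorm' ρ p (Tleft P f t) ≤ ENNReal.ofReal (M * Real.exp (w * t)) * enorm' ρ p f) ∧
  (∀ f, memLprho ρ p f → pdist ρ p (Tleft P f 0) f = 0) ∧
  (∀ t ≥ (0 : ℝ), ∀ u ≥ (0 : ℝ), ∀ f, memLprho ρ p f →
      pdist ρ p (Tleft P f (t + u)) (Tleft P (Tleft P f u) t) = 0) ∧
  (∀ f, memLprho ρ p f → ∀ t ≥ (0 : ℝ),
      Filter.Tendsto (fun u => pdist ρ p (Tleft P f u) (Tleft P f t))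
        (nhdsWithin t (Set.Ici 0)) (nhds 0))

/-!
Up to a null set, the position `t + s - n(t,s)` is the fractional part of `t + s`, and
`s ↦ Int.fract (t + s)` preserves Lebesgue measure on `[0, 1]`; different edges `i` have disjoint
sets `M_n(i)`. So `∑_i ∫ ∑_{j ∈ M_{n(t,s)}(i)} h_j(t + s - n(t,s)) ds ≤ ∑_j ∫ h_j` for `h ≥ 0`.

Hölder's inequality against the weights `ρ_j` bounds `|T_t f|^p ρ_i` by the admissibility sum times
`∑_j |f_j|^p ρ_j`, which turns admissibility into the norm bound. Conversely, equality in Hölder's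
inequality is attained at `f_j = ρ_j^{-1/(p-1)}`; testing the norm bound on finitely many of these
functions, cut down to the points reached from an arbitrary subset of one edge, gives the
admissibility inequality almost everywhere. Strong continuity holds for finitely many bounded
continuous functions by dominated convergence, and extends to the whole space by density and the
local uniform boundedness of `T_t`.
-/

/-! ### Rotation of the unit interval -/

/-- Lebesgue measure on `[0, 1]`. -/
abbrev unitVol : Measure ℝ := volume.restrict (Set.Icc 0 1)

lemma ae_unitVol_mem_Ioo : ∀ᵐ s ∂unitVol, s ∈ Set.Ioo (0 : ℝ) 1 := by
  rw [unitVol, ← Measure.restrict_congr_set Ioo_ae_eq_Icc]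
  exact ae_restrict_mem measurableSet_Ioo

lemma measurePreserving_fract_Ioc (t : ℝ) :
    MeasurePreserving Int.fract (volume.restrict (Set.Ioc t (t + 1))) unitVol := by
  refine ⟨measurable_fract, Measure.ext fun A hA => ?_⟩
  have hfA : MeasurableSet (Int.fract ⁻¹' A) := measurable_fract hA
  have h_periodic : volume (Int.fract ⁻¹' A ∩ Set.Ioc t (t + 1)) =
      volume (Int.fract ⁻¹' A ∩ Set.Ioc (0 : ℝ) (0 + 1)) :=
    (isAddFundamentalDomain_Ioc one_pos t volume).measure_set_eq
      (isAddFundamentalDomain_Ioc one_pos 0 volume) hfA (by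
        rintro ⟨_, hg⟩
        obtain ⟨k, rfl⟩ := AddSubgroup.mem_zmultiples_iff.1 hg
        ext x
        simp [AddSubgroup.vadd_def])
  have h_fract : (Int.fract ⁻¹' A : Set ℝ) =ᵐ[unitVol] A := by
    filter_upwards [ae_unitVol_mem_Ioo] with s hs
    exact congrArg A (Int.fract_eq_self.2 ⟨hs.1.le, hs.2⟩)
  rw [Measure.map_apply measurable_fract hA, Measure.restrict_apply hfA, h_periodic,
    ← Measure.restrict_apply hfA, zero_add, Measure.restrict_congr_set Ioc_ae_eq_Icc,
    measure_congr h_fract]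

lemma measurePreserving_fract_const_add (t : ℝ) :
    MeasurePreserving (fun s => Int.fract (t + s)) unitVol unitVol := by
  have h_translate : MeasurePreserving (t + ·) (volume.restrict (Set.Ioc 0 1))
      (volume.restrict (Set.Ioc t (t + 1))) := by
    simpa using (measurePreserving_add_left volume t).restrict_preimage
      (measurableSet_Ioc (a := t) (b := t + 1))
  rw [Measure.restrict_congr_set Ioc_ae_eq_Icc] at h_translate
  exact (measurePreserving_fract_Ioc t).comp h_translate

lemma lintegral_comp_fract_const_add {u : ℝ → ℝ≥0∞} (hu : AEMeasurable u unitVol) (t : ℝ) :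
    ∫⁻ s, u (Int.fract (t + s)) ∂unitVol = ∫⁻ s, u s ∂unitVol := by
  have hφ := measurePreserving_fract_const_add t
  rw [← lintegral_map' (hφ.map_eq.symm ▸ hu) hφ.aemeasurable, hφ.map_eq]

lemma fract_fract_add_sub {s : ℝ} (hs : s ∈ Set.Ico 0 1) (t : ℝ) :
    Int.fract (Int.fract (t + s) - t) = s := by
  rw [Int.fract_eq_iff]
  exact ⟨hs.1, hs.2, -⌊t + s⌋, by push_cast; rw [Int.fract]; ring⟩

lemma measurable_nfl (t : ℝ) : Measurable (nfl t) :=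
  Nat.measurable_floor.comp (measurable_id.add_const t)

lemma add_sub_nfl_eq_fract {t s : ℝ} (h : 0 ≤ s + t) : s + t - nfl t s = Int.fract (t + s) := by
  rw [nfl, natCast_floor_eq_intCast_floor h, add_comm t s, Int.fract]

lemma nfl_add {t u s : ℝ} (hts : 0 ≤ s + t) (hu : 0 ≤ u) :
    nfl (t + u) s = nfl t s + nfl u (Int.fract (t + s)) := by
  have h : s + (t + u) = Int.fract (t + s) + u + nfl t s := by
    rw [← add_sub_nfl_eq_fract hts]; ring
  rw [nfl, h, Nat.floor_add_natCast (add_nonneg (Int.fract_nonneg _) hu), add_comm, nfl, nfl]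

/-! ### Combinatorics of the edge tree -/

lemma pIter_add (P : I → Option I) (n m : ℕ) (j : I) :
    pIter P (n + m) j = (pIter P m j).bind (pIter P n) := by
  induction m generalizing j with
  | zero => rfl
  | succ m ih =>
    simp only [pIter, Option.bind_assoc]
    exact congrArg _ (funext ih)

lemma pairwise_disjoint_Mset (P : I → Option I) (n : ℕ) :
    Pairwise (Function.onFun Disjoint (Mset P n)) := fun _ _ hne =>
  Set.disjoint_left.2 fun _ h h' => hne (Option.some_injective _ (h.symm.trans h'))

@[simp]
lemma Mset_zero (P : I → Option I) (i : I) : Mset P 0 i = {i} :=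
  Set.ext fun _ => Option.some_inj

lemma Mset_add (P : I → Option I) (n m : ℕ) (i : I) :
    Mset P (n + m) i = ⋃ k : Mset P n i, Mset P m k := by
  ext j
  simp [Mset, pIter_add, Option.bind_eq_some_iff, and_comm]

lemma tsum_Mset_add {E : Type*} [NormedAddCommGroup E] [CompleteSpace E] (P : I → Option I)
    {n m : ℕ} {i : I} {a : I → E} (ha : Summable fun j : Mset P (n + m) i => a j) :
    ∑' j : Mset P (n + m) i, a j = ∑' k : Mset P n i, ∑' j : Mset P m k, a j := by
  have h_disjoint : Pairwise (Function.onFun Disjoint fun k : Mset P n i => Mset P m (k : I)) :=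
    (pairwise_disjoint_Mset P m).comp_of_injective Subtype.val_injective
  rw [Mset_add] at ha ⊢
  let e := (Set.unionEqSigmaOfDisjoint h_disjoint).symm
  rw [← e.tsum_eq]
  exact Summable.tsum_sigma (e.summable_iff.2 ha)

lemma tsum_tsum_Mset_le (P : I → Option I) (n : ℕ) (a : I → ℝ≥0∞) :
    ∑' i, ∑' j : Mset P n i, a j ≤ ∑' j, a j := by
  have h := ENNReal.tsum_biUnion (f := a) (t := Mset P n)
    fun i _ k _ hik => pairwise_disjoint_Mset P n hik
  exact h.symm.trans_le (ENNReal.tsum_comp_le_tsum_of_injective Subtype.val_injective a)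

/-! ### Sums over the branches reached after time `t` -/

/-- The sum of `h` over the points reached by travelling for time `t` from the point `s` of the
edge `i`. It extends `Tleft` to values in any additive topological monoid, and takes the
position `Int.fract (t + s)` so that no truncated subtraction occurs. -/
def branchSum {E : Type*} [AddCommMonoid E] [TopologicalSpace E] (P : I → Option I)
    (h : I → ℝ → E) (t : ℝ) (i : I) (s : ℝ) : E :=
  ∑' j : Mset P (nfl t s) i, h j (Int.fract (t + s))

lemma Tleft_eq_branchSum (P : I → Option I) (f : I → ℝ → ℝ) (i : I) {t s : ℝ}
    (h : 0 ≤ s + t) : Tleft P f t i s = branchSum P f t i s := by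
  simp only [Tleft, branchSum, ← add_sub_nfl_eq_fract h, add_comm]

section Value

variable {E : Type*} [AddCommMonoid E] [TopologicalSpace E] (P : I → Option I) (h : I → ℝ → E)

lemma branchSum_of_add_lt_one (i : I) {t s : ℝ} (h0 : 0 ≤ s + t) (h1 : s + t < 1) :
    branchSum P h t i s = h i (t + s) := by
  rw [branchSum, Int.fract_eq_self.2 (add_comm t s ▸ ⟨h0, h1⟩), nfl, Nat.floor_eq_zero.2 h1,
    Mset_zero]
  exact tsum_singleton i fun j => h j (t + s)

lemma branchSum_eq_tsum_indicator (t : ℝ) (i : I) (s : ℝ) :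
    branchSum P h t i s =
      ∑' j, {s | j ∈ Mset P (nfl t s) i}.indicator (fun s => h j (Int.fract (t + s))) s :=
  tsum_subtype (Mset P (nfl t s) i) fun j => h j (Int.fract (t + s))

lemma branchSum_eq_zero {t s : ℝ} {i : I}
    (h_disjoint : Disjoint (Mset P (nfl t s) i) (Function.support h)) :
    branchSum P h t i s = 0 := by
  have h_zero (j : Mset P (nfl t s) i) : h j = 0 :=
    Function.notMem_support.1 (Set.disjoint_left.1 h_disjoint j.2)
  simp [branchSum, h_zero]

end Value

lemma measurableSet_mem_Mset_nfl (P : I → Option I) (t : ℝ) (i j : I) :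
    MeasurableSet {s | j ∈ Mset P (nfl t s) i} :=
  measurable_nfl t (MeasurableSet.of_discrete (s := {n | j ∈ Mset P n i}))

lemma aemeasurable_branchSum {E : Type*} [AddCommMonoid E] [TopologicalSpace E]
    [TopologicalSpace.IsCompletelyMetrizableSpace E] [SecondCountableTopology E]
    [MeasurableSpace E] [BorelSpace E] [MeasurableAdd₂ E] [Countable I] (P : I → Option I)
    {h : I → ℝ → E} (hh : ∀ j, AEMeasurable (h j) unitVol) (t : ℝ) (i : I) :
    AEMeasurable (branchSum P h t i) unitVol := by
  simp only [funext (branchSum_eq_tsum_indicator P h t i)]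
  exact AEMeasurable.tsum fun j => ((hh j).comp_quasiMeasurePreserving
    (measurePreserving_fract_const_add t).quasiMeasurePreserving).indicator
      (measurableSet_mem_Mset_nfl P t i j)

lemma tsum_lintegral_branchSum_le [Countable I] (P : I → Option I) {h : I → ℝ → ℝ≥0∞}
    (hh : ∀ j, AEMeasurable (h j) unitVol) (t : ℝ) :
    ∑' i, ∫⁻ s, branchSum P h t i s ∂unitVol ≤ ∑' j, ∫⁻ s, h j s ∂unitVol := by
  have h_comp (j : I) : AEMeasurable (fun s => h j (Int.fract (t + s))) unitVol :=
    (hh j).comp_quasiMeasurePreserving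
      (measurePreserving_fract_const_add t).quasiMeasurePreserving
  calc ∑' i, ∫⁻ s, branchSum P h t i s ∂unitVol
      = ∫⁻ s, ∑' i, branchSum P h t i s ∂unitVol :=
        (lintegral_tsum (aemeasurable_branchSum P hh t)).symm
    _ ≤ ∫⁻ s, ∑' j, h j (Int.fract (t + s)) ∂unitVol :=
        lintegral_mono fun s => tsum_tsum_Mset_le P (nfl t s) fun j => h j (Int.fract (t + s))
    _ = ∑' j, ∫⁻ s, h j (Int.fract (t + s)) ∂unitVol := lintegral_tsum h_comp
    _ = ∑' j, ∫⁻ s, h j s ∂unitVol :=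
        tsum_congr fun j => lintegral_comp_fract_const_add (hh j) t

lemma branchSum_add {E : Type*} [NormedAddCommGroup E] [CompleteSpace E] (P : I → Option I)
    {h : I → ℝ → E} {t u s : ℝ} {i : I} (hts : 0 ≤ s + t) (hu : 0 ≤ u)
    (h_summable : Summable fun j : Mset P (nfl (t + u) s) i => h j (Int.fract (t + u + s))) :
    branchSum P h (t + u) i s = branchSum P (branchSum P h u) t i s := by
  have h_fract : Int.fract (u + Int.fract (t + s)) = Int.fract (t + u + s) :=
    Int.fract_eq_fract.2 ⟨-⌊t + s⌋, by rw [Int.fract]; push_cast; ring⟩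
  rw [nfl_add hts hu] at h_summable
  rw [branchSum, nfl_add hts hu, tsum_Mset_add P (a := (h · _)) h_summable]
  simp only [branchSum, h_fract]

/-! ### The weighted space as a Lebesgue space on `I × ℝ` -/

/-- The measure on `I × ℝ` that puts `ρ_i(s) ds` on the copy `{i} × [0, 1]` of the edge `i`, so
that `L^p_ρ(L(G))` is the Lebesgue space `L^p(edgeMeasure ρ)`. -/
def edgeMeasure [MeasurableSpace I] (ρ : I → ℝ → ℝ) : Measure (I × ℝ) :=
  Measure.sum fun i =>
    (unitVol.withDensity fun s => ENNReal.ofReal (ρ i s)).map (Prod.mk i)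

namespace IsWeight

variable {ρ : I → ℝ → ℝ}

lemma aemeasurable_ofReal (hρ : IsWeight ρ) (i : I) :
    AEMeasurable (fun s => ENNReal.ofReal (ρ i s)) unitVol :=
  (hρ.integrable i).aemeasurable.ennreal_ofReal

lemma ae_ofReal_ne_zero (hρ : IsWeight ρ) (i : I) :
    ∀ᵐ s ∂unitVol, ENNReal.ofReal (ρ i s) ≠ 0 :=
  (hρ.pos i).mono fun _ hs => (ENNReal.ofReal_pos.2 hs).ne'

lemma ae_withDensity_eq (hρ : IsWeight ρ) (i : I) :
    ae (unitVol.withDensity fun s => ENNReal.ofReal (ρ i s)) = ae unitVol :=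
  le_antisymm (withDensity_absolutelyContinuous _ _).ae_le
    (withDensity_absolutelyContinuous' (hρ.aemeasurable_ofReal i) (hρ.ae_ofReal_ne_zero i)).ae_le

variable [MeasurableSpace I] [DiscreteMeasurableSpace I]

lemma lintegral_edgeMeasure (hρ : IsWeight ρ) (F : I × ℝ → ℝ≥0∞) :
    ∫⁻ x, F x ∂edgeMeasure ρ =
      ∑' i, ∫⁻ s, F (i, s) * ENNReal.ofReal (ρ i s) ∂unitVol := by
  rw [edgeMeasure, lintegral_sum_measure]
  refine tsum_congr fun i => ?_
  rw [(measurableEmbedding_prodMk_left i).lintegral_map,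
    lintegral_withDensity_eq_lintegral_mul_non_measurable₀ _ (hρ.aemeasurable_ofReal i)
      (ae_of_all _ fun _ => ENNReal.ofReal_lt_top)]
  simp only [Pi.mul_apply, mul_comm]

lemma aemeasurable_edgeMeasure_iff [Countable I] {E : Type*} [MeasurableSpace E]
    (hρ : IsWeight ρ) {f : I × ℝ → E} :
    AEMeasurable f (edgeMeasure ρ) ↔ ∀ i, AEMeasurable (fun s => f (i, s)) unitVol := by
  rw [edgeMeasure, aemeasurable_sum_measure_iff]
  refine forall_congr' fun i => ?_
  rw [(measurableEmbedding_prodMk_left i).aemeasurable_map_iff]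
  exact ⟨fun h => h.mono_ac (Measure.ae_le_iff_absolutelyContinuous.1
      (hρ.ae_withDensity_eq i).ge),
    fun h => h.mono_ac (Measure.ae_le_iff_absolutelyContinuous.1 (hρ.ae_withDensity_eq i).le)⟩

end IsWeight

lemma ofReal_abs_rpow_mul {p : ℝ} (hp : 0 ≤ p) (a r : ℝ) :
    ENNReal.ofReal (|a| ^ p * r) = ‖a‖ₑ ^ p * ENNReal.ofReal r := by
  rw [ENNReal.ofReal_mul (by positivity), ← ENNReal.ofReal_rpow_of_nonneg (abs_nonneg a) hp,
    Real.enorm_eq_ofReal_abs]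

section Norm

variable {ρ : I → ℝ → ℝ} {p : ℝ}

lemma pnorm_eq_tsum_lintegral_enorm (ρ : I → ℝ → ℝ) (hp : 0 ≤ p) (f : I → ℝ → ℝ) :
    pnorm ρ p f = ∑' i, ∫⁻ s, ‖f i s‖ₑ ^ p * ENNReal.ofReal (ρ i s) ∂unitVol := by
  simp only [pnorm, ofReal_abs_rpow_mul hp]

lemma pnorm_eq_lintegral_edgeMeasure [MeasurableSpace I] [DiscreteMeasurableSpace I]
    (hρ : IsWeight ρ) (hp : 0 ≤ p) (f : I → ℝ → ℝ) :
    pnorm ρ p f = ∫⁻ x, ‖f x.1 x.2‖ₑ ^ p ∂edgeMeasure ρ := by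
  rw [hρ.lintegral_edgeMeasure, pnorm_eq_tsum_lintegral_enorm ρ hp]

lemma enorm'_eq_eLpNorm [MeasurableSpace I] [DiscreteMeasurableSpace I]
    (hρ : IsWeight ρ) (hp : 0 < p) (f : I → ℝ → ℝ) :
    enorm' ρ p f = eLpNorm (fun x => f x.1 x.2) (ENNReal.ofReal p) (edgeMeasure ρ) := by
  rw [enorm', pnorm_eq_lintegral_edgeMeasure hρ hp.le,
    eLpNorm_eq_lintegral_rpow_enorm_toReal (ENNReal.ofReal_pos.2 hp).ne' ENNReal.ofReal_ne_top,
    ENNReal.toReal_ofReal hp.le]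

lemma enorm'_lt_top_iff (hp : 0 < p) {f : I → ℝ → ℝ} :
    enorm' ρ p f < ⊤ ↔ pnorm ρ p f < ⊤ :=
  ENNReal.rpow_lt_top_iff_of_pos (one_div_pos.2 hp)

lemma memLprho_iff_memLp [MeasurableSpace I] [DiscreteMeasurableSpace I] [Countable I]
    (hρ : IsWeight ρ) (hp : 0 < p) {f : I → ℝ → ℝ} :
    memLprho ρ p f ↔ MemLp (fun x => f x.1 x.2) (ENNReal.ofReal p) (edgeMeasure ρ) := by
  rw [memLprho, MemLp, aestronglyMeasurable_iff_aemeasurable, hρ.aemeasurable_edgeMeasure_iff,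
    ← enorm'_eq_eLpNorm hρ hp, enorm'_lt_top_iff hp]

lemma memLprho.sub [Countable I] (hρ : IsWeight ρ) (hp : 0 < p) {f g : I → ℝ → ℝ}
    (hf : memLprho ρ p f) (hg : memLprho ρ p g) : memLprho ρ p fun i s => f i s - g i s := by
  let _ : MeasurableSpace I := ⊤
  rw [memLprho_iff_memLp hρ hp] at *
  exact hf.sub hg

lemma enorm'_congr {f g : I → ℝ → ℝ} (h : ∀ i, f i =ᵐ[unitVol] g i) :
    enorm' ρ p f = enorm' ρ p g := by
  rw [enorm', enorm', pnorm, pnorm]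
  congr 1
  refine tsum_congr fun i => lintegral_congr_ae ?_
  filter_upwards [h i] with s hs
  rw [hs]

lemma pdist_comm (ρ : I → ℝ → ℝ) (p : ℝ) (f g : I → ℝ → ℝ) :
    pdist ρ p f g = pdist ρ p g f := by
  simp only [pdist, enorm', pnorm, abs_sub_comm]

lemma pdist_eq_zero_of_ae_eq (hp : 0 < p) {f g : I → ℝ → ℝ}
    (h : ∀ i, f i =ᵐ[unitVol] g i) : pdist ρ p f g = 0 := by
  have h_sub (i : I) : (fun s => f i s - g i s) =ᵐ[unitVol] 0 :=
    (h i).mono fun _ hs => sub_eq_zero.2 hs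
  rw [pdist, enorm'_congr h_sub, enorm', pnorm]
  simp [hp, hp.ne']

lemma pdist_triangle [Countable I] (hρ : IsWeight ρ) (hp : 1 ≤ p) {f g h : I → ℝ → ℝ}
    (hf : memLprho ρ p f) (hg : memLprho ρ p g) (hh : memLprho ρ p h) :
    pdist ρ p f h ≤ pdist ρ p f g + pdist ρ p g h := by
  let _ : MeasurableSpace I := ⊤
  have hp0 : 0 < p := one_pos.trans_le hp
  simp only [pdist, enorm'_eq_eLpNorm hρ hp0]
  have h_split : (fun x : I × ℝ => f x.1 x.2 - h x.1 x.2) =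
      (fun x => f x.1 x.2 - g x.1 x.2) + fun x => g x.1 x.2 - h x.1 x.2 :=
    funext fun x => (sub_add_sub_cancel _ _ _).symm
  rw [h_split]
  exact eLpNorm_add_le ((memLprho_iff_memLp hρ hp0).1 (hf.sub hρ hp0 hg)).1
    ((memLprho_iff_memLp hρ hp0).1 (hg.sub hρ hp0 hh)).1 (ENNReal.one_le_ofReal.2 hp)

end Norm

/-! ### Density -/

/-- A family of continuous functions with a common bound, only finitely many of them nonzero. -/
structure IsTestFamily (g : I → ℝ → ℝ) : Prop where
  continuous : ∀ j, Continuous (g j)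
  bounded : ∃ C, ∀ j x, ‖g j x‖ ≤ C
  finite_support : (Function.support g).Finite

lemma IsWeight.isLocallyFiniteMeasure_edgeMeasure [MeasurableSpace I]
    [DiscreteMeasurableSpace I] [TopologicalSpace I] [DiscreteTopology I] {ρ : I → ℝ → ℝ}
    (hρ : IsWeight ρ) : IsLocallyFiniteMeasure (edgeMeasure ρ) := by
  refine ⟨fun x => ⟨Prod.fst ⁻¹' {x.1},
    ((isOpen_discrete {x.1}).preimage continuous_fst).mem_nhds rfl, ?_⟩⟩
  have h_meas : MeasurableSet (Prod.fst ⁻¹' {x.1} : Set (I × ℝ)) :=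
    measurable_fst (MeasurableSet.of_discrete)
  rw [← lintegral_indicator_one h_meas, hρ.lintegral_edgeMeasure, tsum_eq_single x.1]
  · simpa using (hρ.integrable x.1).lintegral_lt_top
  · intro i hi
    simp [hi]

lemma memLprho.exists_isTestFamily_pdist_le [Countable I] {ρ : I → ℝ → ℝ} (hρ : IsWeight ρ)
    {p : ℝ} (hp : 0 < p) {f : I → ℝ → ℝ} (hf : memLprho ρ p f) {ε : ℝ≥0∞} (hε : ε ≠ 0) :
    ∃ g, IsTestFamily g ∧ memLprho ρ p g ∧ pdist ρ p f g ≤ ε := by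
  let _ : MeasurableSpace I := ⊤
  let _ : TopologicalSpace I := ⊥
  have _ : DiscreteTopology I := ⟨rfl⟩
  have _ : IsLocallyFiniteMeasure (edgeMeasure ρ) := hρ.isLocallyFiniteMeasure_edgeMeasure
  obtain ⟨G, hG_supp, h_dist, hG_cont, hG_mem⟩ :=
    ((memLprho_iff_memLp hρ hp).1 hf).exists_hasCompactSupport_eLpNorm_sub_le
      ENNReal.ofReal_ne_top hε
  have h_finite : (Prod.fst '' tsupport G).Finite :=
    (hG_supp.image continuous_fst).finite_of_discrete
  obtain ⟨C, hC⟩ := hG_supp.exists_bound_of_continuous hG_cont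
  refine ⟨fun j x => G (j, x), ⟨fun j => hG_cont.comp (Continuous.prodMk_right j),
    ⟨C, fun j x => hC (j, x)⟩, h_finite.subset fun j hj => ?_⟩,
    (memLprho_iff_memLp hρ hp).2 hG_mem, (enorm'_eq_eLpNorm hρ hp _).trans_le h_dist⟩
  obtain ⟨x, hx⟩ := Function.ne_iff.1 hj
  exact ⟨(j, x), subset_tsupport G hx, rfl⟩

/-! ### Hölder's inequality: sufficiency -/

lemma tsum_rpow_le_tsum_rpow_mul_mul {ι : Type*} {p : ℝ} (hp : 1 < p) {r : ι → ℝ≥0∞}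
    (hr0 : ∀ j, r j ≠ 0) (hr : ∀ j, r j ≠ ⊤) (x : ι → ℝ≥0∞) :
    (∑' j, x j) ^ p ≤
      (∑' j, x j ^ p * r j) * (∑' j, r j ^ (-(1 / (p - 1)))) ^ (p - 1) := by
  let _ : MeasurableSpace ι := ⊤
  have hp0 : 0 < p := one_pos.trans hp
  have hp1 : 0 < p - 1 := sub_pos.2 hp
  have h_prod (j : ι) : x j * r j ^ (1 / p) * r j ^ (-(1 / p)) = x j := by
    rw [mul_assoc, ← ENNReal.rpow_add _ _ (hr0 j) (hr j), add_neg_cancel, ENNReal.rpow_zero,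
      mul_one]
  have h_left (j : ι) : (x j * r j ^ (1 / p)) ^ p = x j ^ p * r j := by
    rw [ENNReal.mul_rpow_of_nonneg _ _ hp0.le, ← ENNReal.rpow_mul, one_div_mul_cancel hp0.ne',
      ENNReal.rpow_one]
  have h_right (j : ι) : (r j ^ (-(1 / p))) ^ p.conjExponent = r j ^ (-(1 / (p - 1))) := by
    rw [← ENNReal.rpow_mul, Real.conjExponent]
    congr 1
    field_simp
  have h_exp : 1 / p.conjExponent * p = p - 1 := by
    rw [Real.conjExponent]
    field_simp
  have h_holder := ENNReal.lintegral_mul_le_Lp_mul_Lq Measure.count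
    (Real.HolderConjugate.conjExponent hp) (f := fun j => x j * r j ^ (1 / p))
    (g := fun j => r j ^ (-(1 / p))) Measurable.of_discrete.aemeasurable
    Measurable.of_discrete.aemeasurable
  simp only [lintegral_count, Pi.mul_apply, h_prod, h_left, h_right] at h_holder
  calc (∑' j, x j) ^ p ≤ _ := ENNReal.rpow_le_rpow h_holder hp0.le
    _ = _ := by
      rw [ENNReal.mul_rpow_of_nonneg _ _ hp0.le, ← ENNReal.rpow_mul, ← ENNReal.rpow_mul, h_exp,
        one_div_mul_cancel hp0.ne', ENNReal.rpow_one]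

/-- The family `ρ_j^{-1/(p-1)}`, for which Hölder's inequality against `ρ_j` is an equality. -/
def dualWeight (ρ : I → ℝ → ℝ) (p : ℝ) (j : I) (x : ℝ) : ℝ≥0∞ :=
  ENNReal.ofReal (ρ j x) ^ (-(1 / (p - 1)))

/-- The admissibility condition at time `t` for the operator norm bound `B`, almost everywhere
on every edge. The weight `ρ_i(s)` stands on the left, so that nothing is divided by it. -/
def AEAdmissibleAt (P : I → Option I) (ρ : I → ℝ → ℝ) (p : ℝ) (B : ℝ≥0∞) (t : ℝ) : Prop :=
  ∀ i, ∀ᵐ s ∂unitVol,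
    branchSum P (dualWeight ρ p) t i s ^ (p - 1) * ENNReal.ofReal (ρ i s) ≤ B ^ p

lemma IsWeight.ae_forall_pos_fract {ρ : I → ℝ → ℝ} [Countable I] (hρ : IsWeight ρ) (t : ℝ) :
    ∀ᵐ s ∂unitVol, ∀ j, 0 < ρ j (Int.fract (t + s)) :=
  (measurePreserving_fract_const_add t).quasiMeasurePreserving.ae (ae_all_iff.2 hρ.pos)

lemma Tleft_ae_eq_branchSum (P : I → Option I) (f : I → ℝ → ℝ) {t : ℝ} (ht : 0 ≤ t) (i : I) :
    Tleft P f t i =ᵐ[unitVol] branchSum P f t i := by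
  filter_upwards [ae_unitVol_mem_Ioo] with s hs
  exact Tleft_eq_branchSum P f i (add_nonneg hs.1.le ht)

lemma enorm_branchSum_le (P : I → Option I) (f : I → ℝ → ℝ) (t : ℝ) (i : I) (s : ℝ) :
    ‖branchSum P f t i s‖ₑ ≤ branchSum P (fun j x => ‖f j x‖ₑ) t i s :=
  enorm_tsum_le_tsum_enorm

lemma Tleft_zero_ae_eq (P : I → Option I) (f : I → ℝ → ℝ) (i : I) :
    Tleft P f 0 i =ᵐ[unitVol] f i := by
  filter_upwards [Tleft_ae_eq_branchSum P f le_rfl i, ae_unitVol_mem_Ioo] with s h_eq hs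
  rw [h_eq, branchSum_of_add_lt_one P f i (by linarith [hs.1]) (by linarith [hs.2]), zero_add]

namespace AEAdmissibleAt

variable [Countable I] {P : I → Option I} {ρ : I → ℝ → ℝ} {p t : ℝ} {B : ℝ≥0∞}

lemma ae_branchSum_rpow_mul_le (h : AEAdmissibleAt P ρ p B t) (hρ : IsWeight ρ) (hp : 1 < p)
    (x : I → ℝ → ℝ≥0∞) (i : I) :
    ∀ᵐ s ∂unitVol, branchSum P x t i s ^ p * ENNReal.ofReal (ρ i s) ≤
      B ^ p * branchSum P (fun j y => x j y ^ p * ENNReal.ofReal (ρ j y)) t i s := by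
  filter_upwards [h i, hρ.ae_forall_pos_fract t] with s h_adm h_pos
  set S := branchSum P (fun j y => x j y ^ p * ENNReal.ofReal (ρ j y)) t i s
  set D := branchSum P (dualWeight ρ p) t i s
  have h_holder : branchSum P x t i s ^ p ≤ S * D ^ (p - 1) :=
    tsum_rpow_le_tsum_rpow_mul_mul hp
      (fun j : Mset P (nfl t s) i => (ENNReal.ofReal_pos.2 (h_pos j)).ne')
      (fun _ => ENNReal.ofReal_ne_top) fun j => x j (Int.fract (t + s))
  calc branchSum P x t i s ^ p * ENNReal.ofReal (ρ i s)
      ≤ S * D ^ (p - 1) * ENNReal.ofReal (ρ i s) := by gcongr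
    _ = S * (D ^ (p - 1) * ENNReal.ofReal (ρ i s)) := mul_assoc _ _ _
    _ ≤ S * B ^ p := by gcongr
    _ = B ^ p * S := mul_comm _ _

lemma tsum_lintegral_branchSum_rpow_le (h : AEAdmissibleAt P ρ p B t) (hρ : IsWeight ρ)
    (hp : 1 < p) {x : I → ℝ → ℝ≥0∞} (hx : ∀ j, AEMeasurable (x j) unitVol) :
    ∑' i, ∫⁻ s, branchSum P x t i s ^ p * ENNReal.ofReal (ρ i s) ∂unitVol ≤
      B ^ p * ∑' j, ∫⁻ s, x j s ^ p * ENNReal.ofReal (ρ j s) ∂unitVol := by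
  have h_meas (j : I) : AEMeasurable (fun y => x j y ^ p * ENNReal.ofReal (ρ j y)) unitVol :=
    ((hx j).pow_const p).mul (hρ.aemeasurable_ofReal j)
  calc _ ≤ ∑' i, ∫⁻ s, B ^ p *
        branchSum P (fun j y => x j y ^ p * ENNReal.ofReal (ρ j y)) t i s ∂unitVol :=
        ENNReal.tsum_le_tsum fun i =>
          lintegral_mono_ae (h.ae_branchSum_rpow_mul_le hρ hp x i)
    _ = B ^ p * ∑' i, ∫⁻ s,
        branchSum P (fun j y => x j y ^ p * ENNReal.ofReal (ρ j y)) t i s ∂unitVol := by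
        rw [← ENNReal.tsum_mul_left]
        exact tsum_congr fun i =>
          lintegral_const_mul'' _ (aemeasurable_branchSum P h_meas t i)
    _ ≤ _ := by
        gcongr B ^ p * ?_
        exact tsum_lintegral_branchSum_le P h_meas t

variable {f g : I → ℝ → ℝ}

lemma enorm'_Tleft_le (h : AEAdmissibleAt P ρ p B t) (hρ : IsWeight ρ) (hp : 1 < p)
    (ht : 0 ≤ t) (hf : ∀ j, AEMeasurable (f j) unitVol) :
    enorm' ρ p (Tleft P f t) ≤ B * enorm' ρ p f := by
  have hp0 : 0 < p := one_pos.trans hp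
  have h_pnorm : pnorm ρ p (branchSum P f t) ≤ B ^ p * pnorm ρ p f := by
    simp only [pnorm_eq_tsum_lintegral_enorm ρ hp0.le]
    refine le_trans ?_ (h.tsum_lintegral_branchSum_rpow_le hρ hp fun j => (hf j).enorm)
    gcongr
    exact enorm_branchSum_le P f t _ _
  calc enorm' ρ p (Tleft P f t) = enorm' ρ p (branchSum P f t) :=
        enorm'_congr (Tleft_ae_eq_branchSum P f ht)
    _ ≤ (B ^ p * pnorm ρ p f) ^ (1 / p) := by unfold enorm'; gcongr
    _ = B * enorm' ρ p f := by
        rw [ENNReal.mul_rpow_of_nonneg _ _ (by positivity), ← ENNReal.rpow_mul,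
          mul_one_div_cancel hp0.ne', ENNReal.rpow_one, enorm']

lemma memLprho_Tleft (h : AEAdmissibleAt P ρ p B t) (hρ : IsWeight ρ) (hp : 1 < p)
    (hB : B ≠ ⊤) (ht : 0 ≤ t) (hf : memLprho ρ p f) : memLprho ρ p (Tleft P f t) := by
  have hp0 : 0 < p := one_pos.trans hp
  refine ⟨fun i => (aemeasurable_branchSum P hf.1 t i).congr (Tleft_ae_eq_branchSum P f ht i).symm,
    (enorm'_lt_top_iff hp0).1 ?_⟩
  exact (h.enorm'_Tleft_le hρ hp ht hf.1).trans_lt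
    (ENNReal.mul_lt_top hB.lt_top ((enorm'_lt_top_iff hp0).2 hf.2))

lemma ae_summable (h : AEAdmissibleAt P ρ p B t) (hρ : IsWeight ρ) (hp : 1 < p) (hB : B ≠ ⊤)
    (hf : memLprho ρ p f) (i : I) :
    ∀ᵐ s ∂unitVol, Summable fun j : Mset P (nfl t s) i => f j (Int.fract (t + s)) := by
  have hp0 : 0 < p := one_pos.trans hp
  have h_meas := fun j => (hf.1 j).enorm
  have h_finite : ∫⁻ s, branchSum P (fun j y => ‖f j y‖ₑ) t i s ^ p *
      ENNReal.ofReal (ρ i s) ∂unitVol ≠ ⊤ := by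
    refine ((ENNReal.le_tsum i).trans_lt
      ((h.tsum_lintegral_branchSum_rpow_le hρ hp h_meas).trans_lt ?_)).ne
    rw [← pnorm_eq_tsum_lintegral_enorm ρ hp0.le]
    exact ENNReal.mul_lt_top (ENNReal.rpow_lt_top_of_nonneg hp0.le hB) hf.2
  filter_upwards [ae_lt_top' (((aemeasurable_branchSum P h_meas t i).pow_const p).mul
    (hρ.aemeasurable_ofReal i)) h_finite, hρ.ae_ofReal_ne_zero i] with s h_lt h_ne
  refine Summable.of_enorm fun (h_top : branchSum P (fun j y => ‖f j y‖ₑ) t i s = ⊤) => h_lt.ne ?_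
  rw [Pi.mul_apply, h_top, ENNReal.top_rpow_of_pos hp0, ENNReal.top_mul h_ne]

lemma Tleft_sub_ae_eq (h : AEAdmissibleAt P ρ p B t) (hρ : IsWeight ρ) (hp : 1 < p)
    (hB : B ≠ ⊤) (ht : 0 ≤ t) (hf : memLprho ρ p f) (hg : memLprho ρ p g) (i : I) :
    (fun s => Tleft P f t i s - Tleft P g t i s) =ᵐ[unitVol]
      Tleft P (fun j x => f j x - g j x) t i := by
  filter_upwards [Tleft_ae_eq_branchSum P f ht i, Tleft_ae_eq_branchSum P g ht i,
    Tleft_ae_eq_branchSum P (fun j x => f j x - g j x) ht i, h.ae_summable hρ hp hB hf i,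
    h.ae_summable hρ hp hB hg i] with s hsf hsg hs h_sumf h_sumg
  rw [hsf, hsg, hs]
  exact (h_sumf.tsum_sub h_sumg).symm

lemma pdist_Tleft_le (h : AEAdmissibleAt P ρ p B t) (hρ : IsWeight ρ) (hp : 1 < p)
    (hB : B ≠ ⊤) (ht : 0 ≤ t) (hf : memLprho ρ p f) (hg : memLprho ρ p g) :
    pdist ρ p (Tleft P f t) (Tleft P g t) ≤ B * pdist ρ p f g := by
  rw [pdist, enorm'_congr (h.Tleft_sub_ae_eq hρ hp hB ht hf hg)]
  exact h.enorm'_Tleft_le hρ hp ht fun j => (hf.1 j).sub (hg.1 j)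

lemma Tleft_add_ae_eq {u : ℝ} (h : AEAdmissibleAt P ρ p B (t + u)) (hρ : IsWeight ρ)
    (hp : 1 < p) (hB : B ≠ ⊤) (ht : 0 ≤ t) (hu : 0 ≤ u) (hf : memLprho ρ p f) (i : I) :
    Tleft P f (t + u) i =ᵐ[unitVol] Tleft P (Tleft P f u) t i := by
  filter_upwards [ae_unitVol_mem_Ioo, h.ae_summable hρ hp hB hf i] with s hs h_sum
  have hst : 0 ≤ s + t := add_nonneg hs.1.le ht
  rw [Tleft_eq_branchSum P f i (by linarith), branchSum_add P hst hu h_sum,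
    Tleft_eq_branchSum P _ i hst]
  exact tsum_congr fun j =>
    (Tleft_eq_branchSum P f j (add_nonneg (Int.fract_nonneg _) hu)).symm

end AEAdmissibleAt

/-! ### Extremal test functions: necessity -/

section Necessity

variable (P : I → Option I) (h : I → ℝ → ℝ≥0∞) (t : ℝ) (i : I)

lemma branchSum_eq_iSup_finset (s : ℝ) :
    branchSum P h t i s = ⨆ F : Finset I, branchSum P ((F : Set I).indicator h) t i s := by
  refine le_antisymm ?_ (iSup_le fun F => ENNReal.tsum_le_tsum fun j =>
    Set.indicator_le_self (F : Set I) h j _)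
  rw [branchSum_eq_tsum_indicator, ENNReal.tsum_eq_iSup_sum]
  refine iSup_mono fun F => ?_
  rw [branchSum_eq_tsum_indicator]
  refine le_trans (Finset.sum_le_sum fun j hj => ?_) (ENNReal.sum_le_tsum F)
  rw [Set.indicator_of_mem (Finset.mem_coe.2 hj)]

/-- The restriction of the family `h` to the points that are reached in time `t` from the
subset `A` of the edge `i`. -/
def branchRestrict (A : Set ℝ) (j : I) : ℝ → ℝ≥0∞ :=
  {y | Int.fract (y - t) ∈ A ∧ j ∈ Mset P (nfl t (Int.fract (y - t))) i}.indicator (h j)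

lemma branchRestrict_fract_add (A : Set ℝ) (j : I) {s : ℝ} (hs : s ∈ Set.Ico (0 : ℝ) 1) :
    branchRestrict P h t i A j (Int.fract (t + s)) =
      A.indicator ({s | j ∈ Mset P (nfl t s) i}.indicator fun s => h j (Int.fract (t + s))) s := by
  classical
  unfold branchRestrict
  simp only [Set.indicator_apply, Set.mem_ofPred_eq, fract_fract_add_sub hs, ite_and]

lemma branchSum_branchRestrict (A : Set ℝ) {s : ℝ} (hs : s ∈ Set.Ico (0 : ℝ) 1) :
    branchSum P (branchRestrict P h t i A) t i s = A.indicator (branchSum P h t i) s := by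
  rw [branchSum]
  by_cases hsA : s ∈ A
  · simp only [branchRestrict_fract_add P h t i A _ hs, Set.indicator_of_mem hsA, branchSum]
    exact tsum_congr fun j => Set.indicator_of_mem (s := {s | ↑j ∈ Mset P (nfl t s) i}) j.2 _
  · simp [branchRestrict_fract_add P h t i A _ hs, hsA]

lemma aemeasurable_branchRestrict {P h t i} {A : Set ℝ} (hA : MeasurableSet A) {j : I}
    (hj : AEMeasurable (h j) unitVol) : AEMeasurable (branchRestrict P h t i A j) unitVol := by
  have h_fract : Measurable fun y : ℝ => Int.fract (y - t) :=
    measurable_fract.comp (measurable_sub_const t)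
  exact hj.indicator ((h_fract hA).inter (h_fract (measurableSet_mem_Mset_nfl P t i j)))

lemma tsum_lintegral_branchRestrict [Countable I] {h : I → ℝ → ℝ≥0∞}
    (hh : ∀ j, AEMeasurable (h j) unitVol) {A : Set ℝ} (hA : MeasurableSet A) :
    ∑' j, ∫⁻ y, branchRestrict P h t i A j y ∂unitVol =
      ∫⁻ s in A, branchSum P h t i s ∂unitVol := by
  have h_meas := fun j => aemeasurable_branchRestrict (P := P) (t := t) (i := i) hA (hh j)
  calc _ = ∑' j, ∫⁻ s, branchRestrict P h t i A j (Int.fract (t + s)) ∂unitVol :=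
        tsum_congr fun j => (lintegral_comp_fract_const_add (h_meas j) t).symm
    _ = ∫⁻ s, ∑' j, branchRestrict P h t i A j (Int.fract (t + s)) ∂unitVol :=
        (lintegral_tsum fun j => (h_meas j).comp_quasiMeasurePreserving
          (measurePreserving_fract_const_add t).quasiMeasurePreserving).symm
    _ = ∫⁻ s, A.indicator (branchSum P h t i) s ∂unitVol := by
        refine lintegral_congr_ae ?_
        filter_upwards [ae_unitVol_mem_Ioo] with s hs
        by_cases hsA : s ∈ A <;>
          simp [branchRestrict_fract_add P h t i A _ ⟨hs.1.le, hs.2⟩, hsA,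
            branchSum_eq_tsum_indicator]
    _ = _ := lintegral_indicator hA _

end Necessity

lemma branchSum_ne_top (P : I → Option I) {x : I → ℝ → ℝ≥0∞} (hx : (Function.support x).Finite)
    {t s : ℝ} (h_finite : ∀ j, x j (Int.fract (t + s)) ≠ ⊤) (i : I) :
    branchSum P x t i s ≠ ⊤ := by
  have h_supp : Function.support (fun j => x j (Int.fract (t + s))) ⊆ hx.toFinset := fun j hj =>
    hx.mem_toFinset.2 fun h_zero => hj (congrFun h_zero _)
  refine ne_top_of_le_ne_top ?_ (ENNReal.tsum_comp_le_tsum_of_injective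
    (Subtype.val_injective (p := (· ∈ Mset P (nfl t s) i))) fun j => x j (Int.fract (t + s)))
  rw [tsum_eq_sum' h_supp]
  exact ENNReal.sum_ne_top.2 fun j _ => h_finite j

lemma dualWeight_rpow_mul_ae_eq {ρ : I → ℝ → ℝ} (hρ : IsWeight ρ) {p : ℝ} (hp : 1 < p) (j : I) :
    (fun s => dualWeight ρ p j s ^ p * ENNReal.ofReal (ρ j s)) =ᵐ[unitVol] dualWeight ρ p j := by
  have hp1 : p - 1 ≠ 0 := (sub_pos.2 hp).ne'
  filter_upwards [hρ.ae_ofReal_ne_zero j] with s hs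
  have h_exp : -(1 / (p - 1)) * p + 1 = -(1 / (p - 1)) := by
    field_simp
    ring
  calc dualWeight ρ p j s ^ p * ENNReal.ofReal (ρ j s)
      = ENNReal.ofReal (ρ j s) ^ (-(1 / (p - 1)) * p) * ENNReal.ofReal (ρ j s) ^ (1 : ℝ) := by
        rw [dualWeight, ← ENNReal.rpow_mul, ENNReal.rpow_one]
    _ = dualWeight ρ p j s := by
        rw [← ENNReal.rpow_add _ _ hs ENNReal.ofReal_ne_top, h_exp, dualWeight]

lemma dualWeight_ae_ne_top {ρ : I → ℝ → ℝ} (hρ : IsWeight ρ) (p : ℝ) (j : I) :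
    ∀ᵐ s ∂unitVol, dualWeight ρ p j s ≠ ⊤ := by
  filter_upwards [hρ.ae_ofReal_ne_zero j] with s hs
  exact ENNReal.rpow_ne_top_of_ne_zero hs ENNReal.ofReal_ne_top

lemma rpow_sub_one_mul_le {p : ℝ} {S r c : ℝ≥0∞} (hp : 1 < p) (hS : S ≠ ⊤) (h : S ^ p * r ≤ c * S) :
    S ^ (p - 1) * r ≤ c := by
  rcases eq_or_ne S 0 with rfl | hS0
  · simp [hp]
  · rw [← ENNReal.mul_le_mul_iff_left hS0 hS]
    calc S ^ (p - 1) * r * S = S ^ (p - 1 + 1) * r := by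
          rw [ENNReal.rpow_add _ _ hS0 hS, ENNReal.rpow_one, mul_right_comm]
      _ ≤ c * S := by rwa [sub_add_cancel]

section Bound

variable [Countable I] {P : I → Option I} {ρ : I → ℝ → ℝ} {p t : ℝ} {B : ℝ≥0∞}

lemma tsum_lintegral_branchSum_rpow_le_of_enorm'_Tleft_le (hp : 0 < p) (ht : 0 ≤ t) (hB : B ≠ 0)
    (h_bound : ∀ f, memLprho ρ p f → enorm' ρ p (Tleft P f t) ≤ B * enorm' ρ p f)
    {x : I → ℝ → ℝ≥0∞} (hx : ∀ j, AEMeasurable (x j) unitVol)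
    (hx_finite : ∀ j, ∀ᵐ s ∂unitVol, x j s ≠ ⊤) (hx_supp : (Function.support x).Finite) :
    ∑' i, ∫⁻ s, branchSum P x t i s ^ p * ENNReal.ofReal (ρ i s) ∂unitVol ≤
      B ^ p * ∑' j, ∫⁻ s, x j s ^ p * ENNReal.ofReal (ρ j s) ∂unitVol := by
  set f : I → ℝ → ℝ := fun j s => (x j s).toReal
  have h_norm : pnorm ρ p f = ∑' j, ∫⁻ s, x j s ^ p * ENNReal.ofReal (ρ j s) ∂unitVol := by
    rw [pnorm_eq_tsum_lintegral_enorm ρ hp.le]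
    refine tsum_congr fun j => lintegral_congr_ae ?_
    filter_upwards [hx_finite j] with s hs
    rw [Real.enorm_toReal hs]
  have h_norm_T : pnorm ρ p (Tleft P f t) =
      ∑' i, ∫⁻ s, branchSum P x t i s ^ p * ENNReal.ofReal (ρ i s) ∂unitVol := by
    rw [pnorm_eq_tsum_lintegral_enorm ρ hp.le]
    refine tsum_congr fun i => lintegral_congr_ae ?_
    filter_upwards [Tleft_ae_eq_branchSum P f ht i,
      (measurePreserving_fract_const_add t).quasiMeasurePreserving.ae
        (ae_all_iff.2 hx_finite)] with s hs h_fin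
    have h_toReal : branchSum P f t i s = (branchSum P x t i s).toReal :=
      (ENNReal.tsum_toReal_eq fun j : Mset P (nfl t s) i => h_fin j).symm
    rw [hs, h_toReal, Real.enorm_toReal (branchSum_ne_top P hx_supp h_fin i)]
  rw [← h_norm, ← h_norm_T]
  rcases eq_or_ne (pnorm ρ p f) ⊤ with h_top | h_ne
  · simp [h_top, ENNReal.mul_top, hB, hp, hp.le]
  · have h_le := h_bound f ⟨fun j => (hx j).ennreal_toReal, h_ne.lt_top⟩
    rwa [enorm', enorm', one_div, ENNReal.rpow_inv_le_iff hp, ENNReal.mul_rpow_of_nonneg _ _ hp.le,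
      ENNReal.rpow_inv_rpow hp.ne'] at h_le

lemma ae_branchSum_rpow_mul_le_of_enorm'_Tleft_le (hρ : IsWeight ρ) (hp : 0 < p) (ht : 0 ≤ t)
    (hB : B ≠ 0)
    (h_bound : ∀ f, memLprho ρ p f → enorm' ρ p (Tleft P f t) ≤ B * enorm' ρ p f)
    {h : I → ℝ → ℝ≥0∞} (hh : ∀ j, AEMeasurable (h j) unitVol)
    (h_finite : ∀ j, ∀ᵐ s ∂unitVol, h j s ≠ ⊤) (h_supp : (Function.support h).Finite) (i : I) :
    ∀ᵐ s ∂unitVol, branchSum P h t i s ^ p * ENNReal.ofReal (ρ i s) ≤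
      B ^ p * branchSum P (fun j y => h j y ^ p * ENNReal.ofReal (ρ j y)) t i s := by
  set q : I → ℝ → ℝ≥0∞ := fun j y => h j y ^ p * ENNReal.ofReal (ρ j y) with hq
  have hq_meas (j : I) : AEMeasurable (q j) unitVol :=
    ((hh j).pow_const p).mul (hρ.aemeasurable_ofReal j)
  refine ae_le_of_forall_setLIntegral_le_of_sigmaFinite₀
    (((aemeasurable_branchSum P hh t i).pow_const p).mul (hρ.aemeasurable_ofReal i))
    fun A hA _ => ?_
  rw [lintegral_const_mul'' _ (aemeasurable_branchSum P hq_meas t i).restrict]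
  set x := branchRestrict P h t i A with hx
  have h_left : ∫⁻ s in A, branchSum P h t i s ^ p * ENNReal.ofReal (ρ i s) ∂unitVol =
      ∫⁻ s, branchSum P x t i s ^ p * ENNReal.ofReal (ρ i s) ∂unitVol := by
    rw [← lintegral_indicator hA]
    refine lintegral_congr_ae ?_
    filter_upwards [ae_unitVol_mem_Ioo] with s hs
    rw [hx, branchSum_branchRestrict P h t i A ⟨hs.1.le, hs.2⟩]
    by_cases hsA : s ∈ A <;> simp [hsA, hp]
  have h_right (j : I) (y : ℝ) :
      x j y ^ p * ENNReal.ofReal (ρ j y) = branchRestrict P q t i A j y := by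
    classical
    simp only [hx, branchRestrict, hq, Set.indicator_apply]
    split_ifs <;> simp [hp]
  calc _ = _ := h_left
    _ ≤ ∑' k, ∫⁻ s, branchSum P x t k s ^ p * ENNReal.ofReal (ρ k s) ∂unitVol :=
        ENNReal.le_tsum i
    _ ≤ B ^ p * ∑' j, ∫⁻ s, x j s ^ p * ENNReal.ofReal (ρ j s) ∂unitVol :=
        tsum_lintegral_branchSum_rpow_le_of_enorm'_Tleft_le hp ht hB h_bound
          (fun j => aemeasurable_branchRestrict hA (hh j))
          (fun j => (h_finite j).mono fun s hs =>
            ne_top_of_le_ne_top hs (Set.indicator_le_self _ _ s))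
          (h_supp.subset fun j hj h_zero => hj (by
            rw [hx, branchRestrict, h_zero, Set.indicator_zero']))
    _ = _ := by
        simp only [h_right]
        rw [tsum_lintegral_branchRestrict P t i hq_meas hA]

lemma ae_branchSum_indicator_dualWeight_le (hρ : IsWeight ρ) (hp : 1 < p) (ht : 0 ≤ t)
    (hB : B ≠ 0)
    (h_bound : ∀ f, memLprho ρ p f → enorm' ρ p (Tleft P f t) ≤ B * enorm' ρ p f)
    (F : Finset I) (i : I) :
    ∀ᵐ s ∂unitVol, branchSum P ((F : Set I).indicator (dualWeight ρ p)) t i s ^ (p - 1) *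
      ENNReal.ofReal (ρ i s) ≤ B ^ p := by
  have hp0 : 0 < p := one_pos.trans hp
  set d := (F : Set I).indicator (dualWeight ρ p)
  have hd_mem {j : I} (hj : j ∈ F) : d j = dualWeight ρ p j := Set.indicator_of_mem hj _
  have hd_zero {j : I} (hj : j ∉ F) : d j = 0 := Set.indicator_of_notMem hj _
  have hd_meas (j : I) : AEMeasurable (d j) unitVol := by
    by_cases hj : j ∈ F
    · exact hd_mem hj ▸ (hρ.aemeasurable_ofReal j).pow_const _
    · exact hd_zero hj ▸ aemeasurable_zero
  have hd_finite (j : I) : ∀ᵐ s ∂unitVol, d j s ≠ ⊤ :=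
    (dualWeight_ae_ne_top hρ p j).mono fun s hs =>
      ne_top_of_le_ne_top hs (Set.indicator_le_self (F : Set I) (dualWeight ρ p) j s)
  have hd_supp : (Function.support d).Finite :=
    F.finite_toSet.subset Set.support_indicator_subset
  have hd_pow (j : I) : ∀ᵐ s ∂unitVol, d j s ^ p * ENNReal.ofReal (ρ j s) = d j s := by
    by_cases hj : j ∈ F
    · exact hd_mem hj ▸ dualWeight_rpow_mul_ae_eq hρ hp j
    · simp [hd_zero hj, hp0]
  have hφ := (measurePreserving_fract_const_add t).quasiMeasurePreserving
  filter_upwards [ae_branchSum_rpow_mul_le_of_enorm'_Tleft_le hρ hp0 ht hB h_bound hd_meas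
    hd_finite hd_supp i, hφ.ae (ae_all_iff.2 hd_pow), hφ.ae (ae_all_iff.2 hd_finite)]
    with s h_le h_eq h_ne
  refine rpow_sub_one_mul_le hp (branchSum_ne_top P hd_supp h_ne i) (h_le.trans_eq ?_)
  exact congrArg _ (tsum_congr fun j => h_eq j)

theorem aeAdmissibleAt_of_enorm'_Tleft_le (hρ : IsWeight ρ) (hp : 1 < p) (ht : 0 ≤ t)
    (hB : B ≠ 0)
    (h_bound : ∀ f, memLprho ρ p f → enorm' ρ p (Tleft P f t) ≤ B * enorm' ρ p f) :
    AEAdmissibleAt P ρ p B t := by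
  intro i
  have h_finset := fun F => ae_branchSum_indicator_dualWeight_le hρ hp ht hB h_bound F i
  filter_upwards [ae_all_iff.2 h_finset] with s hs
  rw [branchSum_eq_iSup_finset]
  have h_iSup := (ENNReal.orderIsoRpow (p - 1) (sub_pos.2 hp)).map_iSup fun F : Finset I =>
    branchSum P ((F : Set I).indicator (dualWeight ρ p)) t i s
  simp only [ENNReal.orderIsoRpow_apply] at h_iSup
  rw [h_iSup, ENNReal.iSup_mul]
  exact iSup_le hs

end Bound

/-! ### Strong continuity -/

lemma finite_setOf_Mset_inter_nonempty (P : I → Option I) {S : Set I} (hS : S.Finite) (N : ℕ) :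
    {i | ∃ n < N, (Mset P n i ∩ S).Nonempty}.Finite := by
  refine ((Set.finite_lt_nat N).biUnion fun n _ => hS.biUnion fun j _ =>
    Set.Subsingleton.finite (s := {i | pIter P n j = some i}) fun a ha b hb =>
      Option.some_injective _ (ha.symm.trans hb)).subset ?_
  rintro i ⟨n, hn, j, hj, hjS⟩
  exact Set.mem_biUnion hn (Set.mem_biUnion hjS hj)

namespace IsTestFamily

variable {g : I → ℝ → ℝ}

lemma exists_enorm_branchSum_le (hg : IsTestFamily g) (P : I → Option I) :
    ∃ C ≠ ⊤, ∀ t i s, ‖branchSum P g t i s‖ₑ ≤ C := by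
  obtain ⟨C, hC⟩ := hg.bounded
  refine ⟨∑ _j ∈ hg.finite_support.toFinset, ENNReal.ofReal C,
    ENNReal.sum_ne_top.2 fun _ _ => ENNReal.ofReal_ne_top, fun t i s => ?_⟩
  have h_supp : Function.support (fun j => ‖g j (Int.fract (t + s))‖ₑ) ⊆
      hg.finite_support.toFinset := fun j hj =>
    hg.finite_support.mem_toFinset.2 fun h_zero => hj (by simp [h_zero])
  calc ‖branchSum P g t i s‖ₑ ≤ branchSum P (fun j y => ‖g j y‖ₑ) t i s :=
        enorm_branchSum_le P g t i s
    _ ≤ ∑' j, ‖g j (Int.fract (t + s))‖ₑ :=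
        ENNReal.tsum_comp_le_tsum_of_injective Subtype.val_injective
          fun j => ‖g j (Int.fract (t + s))‖ₑ
    _ = ∑ j ∈ hg.finite_support.toFinset, ‖g j (Int.fract (t + s))‖ₑ := tsum_eq_sum' h_supp
    _ ≤ _ := Finset.sum_le_sum fun j _ => by
        rw [← ofReal_norm]
        exact ENNReal.ofReal_le_ofReal (hC j _)

lemma tendsto_branchSum (hg : IsTestFamily g) (P : I → Option I) (i : I) {s : ℝ}
    (hs : s ∈ Set.Ioo (0 : ℝ) 1) :
    Tendsto (fun t => branchSum P g t i s) (nhdsWithin 0 (Set.Ici 0)) (nhds (g i s)) := by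
  have h_cont : Tendsto (fun t => g i (t + s)) (nhdsWithin 0 (Set.Ici 0)) (nhds (g i s)) := by
    have h := ((hg.continuous i).comp (continuous_add_const s)).tendsto 0
    simp only [Function.comp_apply, zero_add] at h
    exact h.mono_left nhdsWithin_le_nhds
  refine h_cont.congr' ?_
  filter_upwards [self_mem_nhdsWithin,
    nhdsWithin_le_nhds (gt_mem_nhds (sub_pos.2 hs.2))] with t (ht : 0 ≤ t) ht1
  exact (branchSum_of_add_lt_one P g i (add_nonneg hs.1.le ht) (by linarith)).symm

variable [Countable I] {ρ : I → ℝ → ℝ} {p : ℝ}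

lemma tendsto_lintegral_branchSum_sub (hg : IsTestFamily g) (hρ : IsWeight ρ) (hp : 0 < p)
    (P : I → Option I) (i : I) :
    Tendsto (fun t => ∫⁻ s, ‖branchSum P g t i s - g i s‖ₑ ^ p * ENNReal.ofReal (ρ i s) ∂unitVol)
      (nhdsWithin 0 (Set.Ici 0)) (nhds 0) := by
  obtain ⟨K, hK, h_le⟩ := hg.exists_enorm_branchSum_le P
  obtain ⟨C, hC⟩ := hg.bounded
  have h_meas (j : I) : AEMeasurable (g j) unitVol := (hg.continuous j).measurable.aemeasurable
  rw [← lintegral_zero (μ := unitVol)]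
  refine tendsto_lintegral_filter_of_dominated_convergence'
    (fun s => (K + ENNReal.ofReal C) ^ p * ENNReal.ofReal (ρ i s))
    (Eventually.of_forall fun t => ?_) (Eventually.of_forall fun t => ae_of_all _ fun s => ?_) ?_ ?_
  · exact ((((aemeasurable_branchSum P h_meas t i).sub (h_meas i)).enorm).pow_const p).mul
      (hρ.aemeasurable_ofReal i)
  · have h_norm : ‖g i s‖ₑ ≤ ENNReal.ofReal C :=
      (ofReal_norm (g i s)).symm.trans_le (ENNReal.ofReal_le_ofReal (hC i s))
    have h_diff := enorm_sub_le.trans (add_le_add (h_le t i s) h_norm)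
    gcongr
  · rw [lintegral_const_mul'' _ (hρ.aemeasurable_ofReal i)]
    exact ENNReal.mul_ne_top
      (ENNReal.rpow_ne_top_of_nonneg hp.le (ENNReal.add_ne_top.2 ⟨hK, ENNReal.ofReal_ne_top⟩))
      (hρ.integrable i).lintegral_lt_top.ne
  · filter_upwards [ae_unitVol_mem_Ioo] with s hs
    have h_pow := ((hg.tendsto_branchSum P i hs).sub_const (g i s)).enorm.ennrpow_const p
    rw [sub_self, enorm_zero, ENNReal.zero_rpow_of_pos hp] at h_pow
    simpa using ENNReal.Tendsto.mul_const h_pow (Or.inr (ENNReal.ofReal_ne_top (r := ρ i s)))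

lemma tendsto_pdist_Tleft_zero (hg : IsTestFamily g) (hρ : IsWeight ρ) (hp : 0 < p)
    (P : I → Option I) :
    Tendsto (fun t => pdist ρ p (Tleft P g t) g) (nhdsWithin 0 (Set.Ici 0)) (nhds 0) := by
  set E := (finite_setOf_Mset_inter_nonempty P hg.finite_support 2).toFinset
  have h_sum : Tendsto (fun t => (∑ i ∈ E, ∫⁻ s, ‖branchSum P g t i s - g i s‖ₑ ^ p *
      ENNReal.ofReal (ρ i s) ∂unitVol) ^ (1 / p)) (nhdsWithin 0 (Set.Ici 0)) (nhds 0) := by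
    have h := (tendsto_finsetSum E fun i _ =>
      hg.tendsto_lintegral_branchSum_sub hρ hp P i).ennrpow_const (1 / p)
    simpa [hp] using h
  refine h_sum.congr' ?_
  filter_upwards [self_mem_nhdsWithin, nhdsWithin_le_nhds (gt_mem_nhds one_pos)]
    with t (ht : 0 ≤ t) ht1
  have h_zero (i : I) (hi : i ∉ E) : ∀ᵐ s ∂unitVol, branchSum P g t i s - g i s = 0 := by
    have h_disjoint {n : ℕ} (hn : n < 2) : Disjoint (Mset P n i) (Function.support g) := by
      rw [Set.disjoint_iff_inter_eq_empty, ← Set.not_nonempty_iff_eq_empty]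
      exact fun h => hi ((Set.Finite.mem_toFinset _).2 ⟨n, hn, h⟩)
    have h_gi : g i = 0 :=
      Function.notMem_support.1 (Set.disjoint_left.1 (h_disjoint two_pos) (by simp))
    filter_upwards [ae_unitVol_mem_Ioo] with s hs
    have h_nfl : nfl t s < 2 := (Nat.floor_lt' two_ne_zero).2 (by push_cast; linarith [hs.2])
    rw [branchSum_eq_zero P g (h_disjoint h_nfl), h_gi, Pi.zero_apply, sub_zero]
  have h_congr (i : I) : (fun s => Tleft P g t i s - g i s) =ᵐ[unitVol]
      fun s => branchSum P g t i s - g i s :=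
    (Tleft_ae_eq_branchSum P g ht i).mono fun s hs => congrArg (· - g i s) hs
  rw [pdist, enorm'_congr h_congr, enorm', pnorm_eq_tsum_lintegral_enorm ρ hp.le, tsum_eq_sum]
  intro i hi
  rw [lintegral_eq_zero_of_ae_eq_zero]
  filter_upwards [h_zero i hi] with s hs
  simp [hs, hp]

end IsTestFamily

section StrongContinuity

variable [Countable I] {P : I → Option I} {ρ : I → ℝ → ℝ} {p : ℝ} {C : ℝ≥0∞} {f : I → ℝ → ℝ}

lemma tendsto_pdist_Tleft_self (hρ : IsWeight ρ) (hp : 1 < p) (hC : C ≠ ⊤)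
    (h_adm : ∀ᶠ t in nhdsWithin 0 (Set.Ici 0), AEAdmissibleAt P ρ p C t)
    (hf : memLprho ρ p f) :
    Tendsto (fun t => pdist ρ p (Tleft P f t) f) (nhdsWithin 0 (Set.Ici 0)) (nhds 0) := by
  have hp0 : 0 < p := one_pos.trans hp
  refine ENNReal.tendsto_nhds_zero.2 fun ε hε => ?_
  set δ := ε / (C + 2)
  have hδ : δ ≠ 0 :=
    ENNReal.div_ne_zero.2 ⟨hε.ne', ENNReal.add_ne_top.2 ⟨hC, ENNReal.ofNat_ne_top⟩⟩
  obtain ⟨g, hg, hg_mem, h_dist⟩ := hf.exists_isTestFamily_pdist_le hρ hp0 hδ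
  filter_upwards [h_adm, self_mem_nhdsWithin, ENNReal.tendsto_nhds_zero.1
    (hg.tendsto_pdist_Tleft_zero hρ hp0 P) δ hδ.bot_lt] with t ht_adm (ht : 0 ≤ t) h_test
  have hTf := ht_adm.memLprho_Tleft hρ hp hC ht hf
  have hTg := ht_adm.memLprho_Tleft hρ hp hC ht hg_mem
  calc pdist ρ p (Tleft P f t) f
      ≤ pdist ρ p (Tleft P f t) (Tleft P g t) + pdist ρ p (Tleft P g t) f :=
        pdist_triangle hρ hp.le hTf hTg hf
    _ ≤ pdist ρ p (Tleft P f t) (Tleft P g t) +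
          (pdist ρ p (Tleft P g t) g + pdist ρ p g f) := by
        gcongr
        exact pdist_triangle hρ hp.le hTg hg_mem hf
    _ ≤ C * δ + (δ + δ) := by
        gcongr
        · exact (ht_adm.pdist_Tleft_le hρ hp hC ht hf hg_mem).trans (by gcongr)
        · exact (pdist_comm ρ p g f).trans_le h_dist
    _ = (C + 2) * δ := by ring
    _ ≤ ε := ENNReal.mul_div_le

lemma pdist_Tleft_add_le (hρ : IsWeight ρ) (hp : 1 < p) (hC : C ≠ ⊤) {t d : ℝ} (ht : 0 ≤ t)
    (hd : 0 ≤ d) (h_t : AEAdmissibleAt P ρ p C t) (h_d : AEAdmissibleAt P ρ p C d)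
    (h_add : AEAdmissibleAt P ρ p C (t + d)) (hf : memLprho ρ p f) :
    pdist ρ p (Tleft P f (t + d)) (Tleft P f t) ≤ C * pdist ρ p (Tleft P f d) f := by
  have h_congr (i : I) : (fun s => Tleft P f (t + d) i s - Tleft P f t i s) =ᵐ[unitVol]
      fun s => Tleft P (Tleft P f d) t i s - Tleft P f t i s :=
    (h_add.Tleft_add_ae_eq hρ hp hC ht hd hf i).mono fun s hs => congrArg (· - Tleft P f t i s) hs
  rw [pdist, enorm'_congr h_congr]
  exact h_t.pdist_Tleft_le hρ hp hC ht (h_d.memLprho_Tleft hρ hp hC hd hf) hf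

theorem tendsto_pdist_Tleft (hρ : IsWeight ρ) (hp : 1 < p)
    (h_adm : ∀ R, ∃ C ≠ ⊤, ∀ t ∈ Set.Icc 0 R, AEAdmissibleAt P ρ p C t) (hf : memLprho ρ p f)
    {t : ℝ} (ht : 0 ≤ t) :
    Tendsto (fun u => pdist ρ p (Tleft P f u) (Tleft P f t)) (nhdsWithin t (Set.Ici 0))
      (nhds 0) := by
  obtain ⟨C, hC, h_adm⟩ := h_adm (t + 1)
  have h_zero : Tendsto (fun d => pdist ρ p (Tleft P f d) f) (nhdsWithin 0 (Set.Ici 0))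
      (nhds 0) := by
    refine tendsto_pdist_Tleft_self hρ hp hC ?_ hf
    filter_upwards [self_mem_nhdsWithin, nhdsWithin_le_nhds (gt_mem_nhds one_pos)]
      with d hd hd1
    exact h_adm d ⟨hd, by linarith⟩
  have h_abs : Tendsto (fun u => |u - t|) (nhdsWithin t (Set.Ici 0))
      (nhdsWithin 0 (Set.Ici 0)) := by
    refine tendsto_nhdsWithin_iff.2 ⟨?_, Eventually.of_forall fun u =>
      Set.mem_Ici.2 (abs_nonneg (u - t))⟩
    have h := (continuous_abs.comp (continuous_sub_right t)).tendsto t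
    simp only [Function.comp_apply, sub_self, abs_zero] at h
    exact h.mono_left nhdsWithin_le_nhds
  have h_bound : Tendsto (fun u => C * pdist ρ p (Tleft P f |u - t|) f)
      (nhdsWithin t (Set.Ici 0)) (nhds 0) := by
    simpa using ENNReal.Tendsto.const_mul (h_zero.comp h_abs) (Or.inr hC)
  refine tendsto_of_tendsto_of_tendsto_of_le_of_le' tendsto_const_nhds h_bound
    (Eventually.of_forall fun _ => zero_le) ?_
  filter_upwards [self_mem_nhdsWithin, nhdsWithin_le_nhds (gt_mem_nhds (lt_add_one t))]
    with u (hu : 0 ≤ u) hu1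
  have h_le {a d : ℝ} (ha : 0 ≤ a) (hd : 0 ≤ d) (had : a + d ≤ t + 1) :
      pdist ρ p (Tleft P f (a + d)) (Tleft P f a) ≤ C * pdist ρ p (Tleft P f d) f :=
    pdist_Tleft_add_le hρ hp hC ha hd (h_adm a ⟨ha, by linarith⟩) (h_adm d ⟨hd, by linarith⟩)
      (h_adm (a + d) ⟨by linarith, had⟩) hf
  rcases le_total t u with htu | hut
  · have h := h_le ht (sub_nonneg.2 htu) (by linarith)
    rwa [add_sub_cancel, ← abs_of_nonneg (sub_nonneg.2 htu)] at h
  · have h := h_le hu (sub_nonneg.2 hut) (by linarith)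
    rwa [add_sub_cancel, pdist_comm, ← abs_of_nonneg (sub_nonneg.2 hut), abs_sub_comm] at h

end StrongContinuity

/-! ### The admissibility condition -/

lemma AEAdmissibleAt.mono {P : I → Option I} {ρ : I → ℝ → ℝ} {p t : ℝ} {B C : ℝ≥0∞}
    (h : AEAdmissibleAt P ρ p B t) (hp : 0 ≤ p) (hBC : B ≤ C) : AEAdmissibleAt P ρ p C t :=
  fun i => (h i).mono fun _ hs => hs.trans (ENNReal.rpow_le_rpow hBC hp)

lemma aeAdmissibleAt_ofReal_iff [Countable I] (P : I → Option I) {ρ : I → ℝ → ℝ}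
    (hρ : IsWeight ρ) {p t b : ℝ} (hp : 0 ≤ p) (hb : 0 ≤ b) (ht : 0 ≤ t) :
    AEAdmissibleAt P ρ p (ENNReal.ofReal b) t ↔
      ∀ i, ∀ᵐ s ∂unitVol,
        (∑' j : Mset P (nfl t s) i,
            ENNReal.ofReal (ρ j (s + t - nfl t s) ^ (-(1 / (p - 1))))) ^ (p - 1)
          ≤ ENNReal.ofReal (b ^ p / ρ i s) := by
  refine forall_congr' fun i => eventually_congr ?_
  filter_upwards [ae_unitVol_mem_Ioo, hρ.pos i, hρ.ae_forall_pos_fract t] with s hs h_pos h_posj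
  rw [ENNReal.ofReal_div_of_pos h_pos, ← ENNReal.ofReal_rpow_of_nonneg hb hp,
    ENNReal.le_div_iff_mul_le (Or.inl (ENNReal.ofReal_pos.2 h_pos).ne')
      (Or.inl ENNReal.ofReal_ne_top),
    add_sub_nfl_eq_fract (add_nonneg hs.1.le ht)]
  simp only [branchSum, dualWeight, ENNReal.ofReal_rpow_of_pos (h_posj _)]

lemma rpow_mul_exp {M : ℝ} (hM : 0 ≤ M) (w t p : ℝ) :
    (M * Real.exp (w * t)) ^ p = M ^ p * Real.exp (p * w * t) := by
  rw [Real.mul_rpow hM (Real.exp_nonneg _), ← Real.exp_mul, mul_comm (w * t), mul_assoc]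

theorem c0SemigroupBound_of_aeAdmissibleAt [Countable I] {P : I → Option I} {ρ : I → ℝ → ℝ}
    (hρ : IsWeight ρ) {M w p : ℝ} (hM : 0 ≤ M) (hp : 1 < p)
    (h : ∀ t ≥ 0, AEAdmissibleAt P ρ p (ENNReal.ofReal (M * Real.exp (w * t))) t) :
    C0SemigroupBound P ρ p M w := by
  have hp0 : 0 < p := one_pos.trans hp
  have h_locally_bounded (R : ℝ) : ∃ C ≠ ⊤, ∀ t ∈ Set.Icc 0 R, AEAdmissibleAt P ρ p C t := by
    refine ⟨ENNReal.ofReal (M * Real.exp (|w| * R)), ENNReal.ofReal_ne_top, fun t ht =>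
      (h t ht.1).mono hp0.le (ENNReal.ofReal_le_ofReal ?_)⟩
    have h_exp : w * t ≤ |w| * R :=
      mul_le_mul (le_abs_self w) ht.2 ht.1 (abs_nonneg w)
    gcongr
  exact ⟨fun t ht f hf => (h t ht).memLprho_Tleft hρ hp ENNReal.ofReal_ne_top ht hf,
    fun t ht f hf => (h t ht).enorm'_Tleft_le hρ hp ht hf.1,
    fun f _ => pdist_eq_zero_of_ae_eq hp0 (Tleft_zero_ae_eq P f),
    fun t ht u hu f hf => pdist_eq_zero_of_ae_eq hp0
      ((h (t + u) (add_nonneg ht hu)).Tleft_add_ae_eq hρ hp ENNReal.ofReal_ne_top ht hu hf),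
    fun f hf t ht => tendsto_pdist_Tleft hρ hp h_locally_bounded hf ht⟩

/-- **Proposition 2.2 (b)**.  Let `ρ` be a weight on the directed metric tree `L(G)`,
`M ≥ 1`, `w ∈ ℝ`, and `1 < p < ∞`.  The left translations `{T_t}_{t ≥ 0}` form a
`C₀`-semigroup of bounded operators on `L^p_ρ(L(G))` with `‖T_t‖ ≤ M e^{wt}` for all `t ≥ 0`
if and only if for all `i ∈ I`, all `t ≥ 0` and almost every `s ∈ [0,1]`,
`(∑_{j ∈ M_{n(t,s)}(i)} ρ_j(s + t - n(t,s))^{-1/(p-1)})^{p-1} ≤ M^p e^{pwt} / ρ_i(s)`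
(the left-hand side being `0` when `M_{n(t,s)}(i)` is empty). -/
theorem c0SemigroupBound_iff_weight_Lp {I : Type*} [Countable I] [Nonempty I]
    (P : I → Option I) (ρ : I → ℝ → ℝ) (hρ : IsWeight ρ) (M w : ℝ) (hM : 1 ≤ M)
    (p : ℝ) (hp : 1 < p) :
    C0SemigroupBound P ρ p M w ↔
      ∀ i, ∀ t ≥ (0 : ℝ), ∀ᵐ s ∂(volume.restrict (Set.Icc (0 : ℝ) 1)),
        (∑' j : Mset P (nfl t s) i,
            ENNReal.ofReal ((ρ (j : I) (s + t - (nfl t s : ℝ))) ^ (-(1 / (p - 1))))) ^ (p - 1)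
          ≤ ENNReal.ofReal (M ^ p * Real.exp (p * w * t) / ρ i s) := by
  have hM0 : 0 < M := one_pos.trans_le hM
  have h_adm (t : ℝ) (ht : t ≥ 0) :=
    aeAdmissibleAt_ofReal_iff P hρ (one_pos.trans hp).le
      (mul_pos hM0 (Real.exp_pos (w * t))).le ht
  simp only [rpow_mul_exp hM0.le] at h_adm
  constructor
  · rintro ⟨-, h_bound, -⟩ i t ht
    have hB : ENNReal.ofReal (M * Real.exp (w * t)) ≠ 0 :=
      (ENNReal.ofReal_pos.2 (by positivity)).ne'
    exact (h_adm t ht).1 (aeAdmissibleAt_of_enorm'_Tleft_le hρ hp ht hB (h_bound t ht)) i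
  · intro h
    exact c0SemigroupBound_of_aeAdmissibleAt hρ hM0.le hp fun t ht =>
      (h_adm t ht).2 fun i => h i t ht

end
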